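/- arXiv:2306.04778 — 4 statements merged into one kernel-verified Lean document; each statement's English description precedes it below -/
import Mathlib

section
/- For a diagonal bounded Bregman divergence L, any fixed prediction f ∈ Δ(A), and datasets y, y′ of equal size with p̄(y) ≻_f p̄(y′), the loss gap is bounded below by a sum of one-dimensional Bregman divergences: L(f, y′) − L(f, y) ≥ Σ_{a=1}^d d_b(p̄(y′)_a, p̄(y)_a). -/
/-!
The three-point identity for Bregman divergences reads
`d_b(u, w) - d_b(v, w) = d_b(u, v) + (b' v - b' w) * (u - v)`.
When `v` lies between `u` and `w`, monotonicity of `b'` (from convexity of `b`) makes the last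
product nonnegative. Applying this in each coordinate with `u = p̄(y')ₐ`, `v = p̄(y)ₐ`, `w = fₐ`
and summing over `a` gives the bound.
-/


open Finset

/-- Empirical distribution of a dataset `y : Fin n → Fin d`. -/
noncomputable def emp {d n : ℕ} (y : Fin n → Fin d) : Fin d → ℝ :=
  fun a => ((Finset.univ.filter (fun i => y i = a)).card : ℝ) / (n : ℝ)

/-- Membership in the simplex Δ(A). -/
def IsSimplex {d : ℕ} (f : Fin d → ℝ) : Prop :=
  (∀ a, 0 ≤ f a) ∧ ∑ a, f a = 1

/-- `ParetoImprove r q p` means `q ≻_r p`: q is a Pareto improvement over p w.r.t. r. -/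
def ParetoImprove {d : ℕ} (r q p : Fin d → ℝ) : Prop :=
  (∀ a, (p a ≤ q a ∧ q a ≤ r a) ∨ (r a ≤ q a ∧ q a ≤ p a)) ∧ ∃ a, p a ≠ q a

/-- The point-mass distribution `e_a`. -/
def pointMass {d : ℕ} (a : Fin d) : Fin d → ℝ := fun a' => if a' = a then 1 else 0

/-- One-dimensional Bregman divergence `d_b(u, v) = b(u) - b(v) - b'(v)(u - v)`. -/
noncomputable def dbreg (b b' : ℝ → ℝ) (u v : ℝ) : ℝ := b u - b v - b' v * (u - v)

/-- Diagonal bounded Bregman divergence loss `L(f, y) = ∑ₐ d_b(p̄(y)ₐ, fₐ)`. -/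
noncomputable def dbbdLoss (b b' : ℝ → ℝ) {d n : ℕ} (f : Fin d → ℝ)
    (y : Fin n → Fin d) : ℝ :=
  ∑ a, dbreg b b' (emp y a) (f a)

/-- Expectation of `g` over datasets of `n` i.i.d. draws from `p`. -/
noncomputable def expLoss {d : ℕ} (p : Fin d → ℝ) (n : ℕ)
    (g : (Fin n → Fin d) → ℝ) : ℝ :=
  ∑ y : Fin n → Fin d, (∏ i, p (y i)) * g y

/-- Loss induced by a scoring rule `S`. -/
noncomputable def srLoss {d : ℕ} (S : (Fin d → ℝ) → Fin d → ℝ) {n : ℕ}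
    (f : Fin d → ℝ) (y : Fin n → Fin d) : ℝ :=
  ((n : ℝ))⁻¹ * ∑ i, S f (y i)

lemma emp_mem_Icc {d n : ℕ} (y : Fin n → Fin d) (a : Fin d) :
    emp y a ∈ Set.Icc (0 : ℝ) 1 := by
  refine ⟨by unfold emp; positivity, div_le_one_of_le₀ ?_ (Nat.cast_nonneg n)⟩
  exact_mod_cast (Finset.card_filter_le _ _).trans_eq (by simp)

lemma IsSimplex.mem_Icc {d : ℕ} {f : Fin d → ℝ} (hf : IsSimplex f) (a : Fin d) :
    f a ∈ Set.Icc (0 : ℝ) 1 :=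
  ⟨hf.1 a, hf.2 ▸ Finset.single_le_sum (fun i _ => hf.1 i) (Finset.mem_univ a)⟩

lemma monotoneOn_of_convexOn_hasDerivWithinAt {s : Set ℝ} {b bD : ℝ → ℝ}
    (hconv : ConvexOn ℝ s b) (hderiv : ∀ x ∈ s, HasDerivWithinAt b (bD x) s x) :
    MonotoneOn bD s := by
  intro x hx z hz hxz
  rcases hxz.eq_or_lt with rfl | hlt
  · exact le_rfl
  · exact (hconv.le_slope_of_hasDerivWithinAt hx hz hlt (hderiv x hx)).trans
      (hconv.slope_le_of_hasDerivWithinAt hx hz hlt (hderiv z hz))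

/-- One-coordinate form of the bound: the superadditivity of a Bregman divergence along a
monotone path from `u` through `v` to `w`. -/
lemma dbreg_le_sub {s : Set ℝ} {b bD : ℝ → ℝ} (hmono : MonotoneOn bD s) {u v w : ℝ}
    (hv : v ∈ s) (hw : w ∈ s) (h : (u ≤ v ∧ v ≤ w) ∨ (w ≤ v ∧ v ≤ u)) :
    dbreg b bD u v ≤ dbreg b bD u w - dbreg b bD v w := by
  have key : 0 ≤ (bD v - bD w) * (u - v) := by
    rcases h with ⟨huv, hvw⟩ | ⟨hwv, hvu⟩
    · exact mul_nonneg_of_nonpos_of_nonpos (sub_nonpos.2 (hmono hv hw hvw)) (sub_nonpos.2 huv)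
    · exact mul_nonneg (sub_nonneg.2 (hmono hw hv hwv)) (sub_nonneg.2 hvu)
  unfold dbreg
  linarith

/-- loss-gap lower bound for CPR. -/
theorem dbbd_CPR_gap_bound (d : ℕ) (hd2 : 2 ≤ d) (b bD : ℝ → ℝ)
    (hconv : ConvexOn ℝ (Set.Icc (0:ℝ) 1) b)
    (hderiv : ∀ x ∈ Set.Icc (0:ℝ) 1, HasDerivWithinAt b (bD x) (Set.Icc (0:ℝ) 1) x)
    (hcont : ContinuousOn bD (Set.Icc (0:ℝ) 1))
    (hbdd : ∃ M : ℝ, ∀ x ∈ Set.Icc (0:ℝ) 1, |bD x| ≤ M)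
    (f : Fin d → ℝ) (hf : IsSimplex f)
    (n : ℕ) (hn : 0 < n) (y y' : Fin n → Fin d)
    (hpar : ParetoImprove f (emp y) (emp y')) :
    ∑ a, dbreg b bD (emp y' a) (emp y a) ≤ dbbdLoss b bD f y' - dbbdLoss b bD f y := by
  unfold dbbdLoss
  rw [← Finset.sum_sub_distrib]
  exact Finset.sum_le_sum fun a _ =>
    dbreg_le_sub (monotoneOn_of_convexOn_hasDerivWithinAt hconv hderiv)
      (emp_mem_Icc y a) (hf.mem_Icc a) (hpar.1 a)
end

section
/- Every Bregman-form loss satisfies Distributional Propriety: if L(f, y) = ∇_B(p̄(y), f) + c(y) for a strictly convex B with subgradient dB and an arbitrary translation c : datasets → ℝ, then for every p ∈ Δ(A), every n ≥ 1, and every prediction f ∈ Δ(A) with f ≠ p, E_{y∼p^n} L(p, y) < E_{y∼p^n} L(f, y). -/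
/-!
Write `w y = ∏ i, p (y i)` for the weights of the i.i.d. draws. They sum to `1`, and the weighted mean
of the empirical distribution `emp y` is `p`. A Bregman loss depends on the prediction only through a
term affine in `emp y`, so the terms `B (emp y) + c n y` cancel in the difference of expected losses
and what remains is the divergence of `p` from `f`,
`E L(f, y) - E L(p, y) = B p - B f - dB f ⬝ (p - f)`,
as in the bias-variance decomposition of Bregman divergences. It is positive for `f ≠ p`: strict
convexity at the midpoint of `f` and `p` makes the subgradient inequality strict.
-/

open Finset

lemma sum_prod_weights {d : ℕ} {p : Fin d → ℝ} (hp : IsSimplex p) (n : ℕ) :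
    ∑ y : Fin n → Fin d, ∏ i, p (y i) = 1 := by
  rw [← Fintype.sum_pow, hp.2, one_pow]

/-- The `j`-th coordinate of `n` i.i.d. draws from `p` has law `p`. -/
lemma sum_prod_weights_indicator {d : ℕ} {p : Fin d → ℝ} (hp : IsSimplex p) (n : ℕ) (j : Fin n)
    (a : Fin d) :
    ∑ y : Fin n → Fin d, (∏ i, p (y i)) * (if y j = a then 1 else 0) = p a := by
  -- The indicator goes into the `j`-th factor, so that the sum factors over the coordinates.
  have h1 : ∀ y : Fin n → Fin d, (∏ i, p (y i)) * (if y j = a then (1 : ℝ) else 0)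
      = ∏ i, p (y i) * (if i = j then (if y i = a then 1 else 0) else 1) := by
    intro y
    rw [Finset.prod_mul_distrib, Finset.prod_ite_eq' Finset.univ j]
    simp
  have h2 := Finset.prod_univ_sum (fun _ : Fin n => (Finset.univ : Finset (Fin d)))
    (fun i b => p b * (if i = j then (if b = a then (1 : ℝ) else 0) else 1))
  rw [Fintype.piFinset_univ] at h2
  rw [Finset.sum_congr rfl fun y _ => h1 y, ← h2, Finset.prod_eq_single j]
  · simp
  · intro i _ hij
    simp [hij, hp.2]
  · simp

/-- The expected empirical distribution is `p`. -/
lemma sum_prod_weights_emp {d : ℕ} {p : Fin d → ℝ} (hp : IsSimplex p) {n : ℕ} (hn : 0 < n)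
    (a : Fin d) :
    ∑ y : Fin n → Fin d, (∏ i, p (y i)) * emp y a = p a := by
  have h1 : ∀ y : Fin n → Fin d, (∏ i, p (y i)) * emp y a
      = (∑ j, (∏ i, p (y i)) * (if y j = a then 1 else 0)) / n := by
    intro y
    rw [← Finset.mul_sum, Finset.sum_boole, emp, mul_div_assoc]
  rw [Finset.sum_congr rfl fun y _ => h1 y, ← Finset.sum_div, Finset.sum_comm,
    Finset.sum_congr rfl fun j _ => sum_prod_weights_indicator hp n j a]
  have : (n : ℝ) ≠ 0 := by positivity
  simp [this]

/-- Expectations of affine functions of the empirical distribution are evaluated at `p`. -/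
lemma sum_prod_weights_affine {d : ℕ} {p : Fin d → ℝ} (hp : IsSimplex p) {n : ℕ} (hn : 0 < n)
    (v f : Fin d → ℝ) :
    ∑ y : Fin n → Fin d, (∏ i, p (y i)) * ∑ a, v a * (emp y a - f a)
      = ∑ a, v a * (p a - f a) := by
  simp_rw [Finset.mul_sum]
  rw [Finset.sum_comm]
  refine Finset.sum_congr rfl fun a _ => ?_
  have h : ∀ y : Fin n → Fin d, (∏ i, p (y i)) * (v a * (emp y a - f a))
      = v a * ((∏ i, p (y i)) * emp y a) - v a * f a * ∏ i, p (y i) := fun y => by ring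
  simp_rw [h]
  rw [Finset.sum_sub_distrib, ← Finset.mul_sum, ← Finset.mul_sum, sum_prod_weights_emp hp hn,
    sum_prod_weights hp]
  ring

/-- For a strictly convex function, the subgradient inequality is strict away from the base point. -/
lemma bregman_pos {d : ℕ} {C : Set (Fin d → ℝ)} {B : (Fin d → ℝ) → ℝ}
    {dB : (Fin d → ℝ) → (Fin d → ℝ)}
    (hsub : ∀ x₀ ∈ C, ∀ x ∈ C, ∑ a, dB x₀ a * (x a - x₀ a) ≤ B x - B x₀)
    (hstrict : StrictConvexOn ℝ C B) {p f : Fin d → ℝ} (hp : p ∈ C) (hf : f ∈ C) (hne : f ≠ p) :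
    ∑ a, dB f a * (p a - f a) < B p - B f := by
  have hhalf : (0 : ℝ) < 1 / 2 := by norm_num
  have hone : (1 / 2 : ℝ) + 1 / 2 = 1 := by norm_num
  have hmid := hstrict.2 hf hp hne hhalf hhalf hone
  have hle := hsub f hf _ (hstrict.1 hf hp hhalf.le hhalf.le hone)
  have hlin : ∑ a, dB f a * (((1 / 2 : ℝ) • f + (1 / 2 : ℝ) • p) a - f a)
      = 1 / 2 * ∑ a, dB f a * (p a - f a) := by
    rw [Finset.mul_sum]
    refine Finset.sum_congr rfl fun a _ => ?_
    simp only [Pi.add_apply, Pi.smul_apply, smul_eq_mul]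
    ring
  simp only [smul_eq_mul] at hmid
  linarith

/-- every Bregman-form loss satisfies Distributional Propriety. -/
theorem bregman_form_satisfies_DP (d : ℕ) (hd2 : 2 ≤ d)
    (C : Set (Fin d → ℝ)) (hC : Convex ℝ C) (hCsimplex : {f : Fin d → ℝ | IsSimplex f} ⊆ C)
    (B : (Fin d → ℝ) → ℝ)
    (dB : (Fin d → ℝ) → (Fin d → ℝ))
    (hsub : ∀ x₀ ∈ C, ∀ x ∈ C, ∑ a, dB x₀ a * (x a - x₀ a) ≤ B x - B x₀)
    (c : (n : ℕ) → (Fin n → Fin d) → ℝ)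
    (L : (Fin d → ℝ) → (n : ℕ) → (Fin n → Fin d) → ℝ)
    (hL : ∀ (f : Fin d → ℝ) (n : ℕ) (y : Fin n → Fin d),
      L f n y = B (emp y) - B f - (∑ a, dB f a * (emp y a - f a)) + c n y)
    (hstrict : StrictConvexOn ℝ C B)
    (p : Fin d → ℝ) (hp : IsSimplex p) (n : ℕ) (hn : 0 < n)
    (f : Fin d → ℝ) (hf : IsSimplex f) (hne : f ≠ p) :
    expLoss p n (fun y => L p n y) < expLoss p n (fun y => L f n y) := by
  have key : ∀ g : Fin d → ℝ, expLoss p n (fun y => L g n y)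
      = ∑ y : Fin n → Fin d, (∏ i, p (y i)) * (B (emp y) + c n y)
        - B g - ∑ a, dB g a * (p a - g a) := by
    intro g
    have h : ∀ y : Fin n → Fin d, (∏ i, p (y i)) * L g n y
        = (∏ i, p (y i)) * (B (emp y) + c n y) - B g * ∏ i, p (y i)
          - (∏ i, p (y i)) * ∑ a, dB g a * (emp y a - g a) := fun y => by rw [hL]; ring
    simp only [expLoss, h]
    rw [Finset.sum_sub_distrib, Finset.sum_sub_distrib, ← Finset.mul_sum,
      sum_prod_weights hp, sum_prod_weights_affine hp hn, mul_one]
  have hpos := bregman_pos hsub hstrict (hCsimplex hp) (hCsimplex hf) hne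
  have hself : ∑ a, dB p a * (p a - p a) = 0 := by simp
  rw [key p, key f, hself]
  linarith
end

section
/- No scoring rule satisfies both Sample Pareto-Alignment and Zero-Minimum: if S is a scoring rule whose induced loss L_S satisfies SPA (for all f, g ∈ Δ(A) and datasets y, f ≻_{p̄(y)} g implies L_S(f, y) < L_S(g, y)), then there exists a dataset y with L_S(p̄(y), y) ≠ 0. -/
/-!
Suppose every dataset gives zero loss at its own empirical distribution. The empirical
distribution `p̄(y)` is a Pareto improvement, with respect to itself, over every other distribution.
For the singleton dataset `(a)`, whose empirical distribution is the point mass at `a`, alignment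
and zero loss therefore give `0 < S g a` for every `g` in the simplex other than that point mass
(`score_pos`). Take two distinct outcomes `a ≠ b` and let `g` be the empirical distribution of the
dataset `(a, b)`. It is not a point mass, so its loss on `(a, b)`, namely `(S g a + S g b) / 2`, is
positive, contradicting zero loss.
-/

open Finset

lemma isSimplex_emp {d n : ℕ} (hn : 0 < n) (y : Fin n → Fin d) : IsSimplex (emp y) := by
  refine ⟨fun a => by unfold emp; positivity, ?_⟩
  have h : ∑ a, (Finset.univ.filter (fun i => y i = a)).card = n := by
    have := Finset.card_eq_sum_card_fiberwise (s := (Finset.univ : Finset (Fin n)))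
      (t := Finset.univ) (f := y) (fun _ _ => by simp)
    simpa using this.symm
  have hn' : (n : ℝ) ≠ 0 := by positivity
  simp only [emp]
  rw [← Finset.sum_div, ← Nat.cast_sum, h, div_self hn']

lemma paretoImprove_self {d : ℕ} {r g : Fin d → ℝ} {a : Fin d} (h : g a ≠ r a) :
    ParetoImprove r r g :=
  ⟨fun c => (le_total (g c) (r c)).imp (fun hc => ⟨hc, le_rfl⟩) (fun hc => ⟨le_rfl, hc⟩), a, h⟩

lemma emp_const {d : ℕ} (a : Fin d) : emp (fun _ : Fin 1 => a) a = 1 := by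
  simp [emp]

lemma emp_pair {d : ℕ} {a b : Fin d} (hab : a ≠ b) :
    emp ![a, b] a = 1 / 2 ∧ emp ![a, b] b = 1 / 2 := by
  simp only [emp, Finset.card_filter, Fin.sum_univ_two, Matrix.cons_val_zero, Matrix.cons_val_one]
  simp [hab, hab.symm]

/-- Alignment and zero loss on the singleton dataset `(a)` force `S g a > 0` for every `g` that is
not the point mass at `a`. -/
lemma score_pos {d : ℕ} {S : (Fin d → ℝ) → Fin d → ℝ}
    (hSPA : ∀ (f g : Fin d → ℝ), IsSimplex f → IsSimplex g →
      ∀ (n : ℕ), 0 < n → ∀ (y : Fin n → Fin d),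
        ParetoImprove (emp y) f g → srLoss S f y < srLoss S g y)
    (hZM : ∀ n : ℕ, 0 < n → ∀ y : Fin n → Fin d, srLoss S (emp y) y = 0)
    {g : Fin d → ℝ} (hg : IsSimplex g) {a : Fin d} (ha : g a ≠ 1) : 0 < S g a := by
  have h := hSPA _ g (isSimplex_emp one_pos fun _ => a) hg 1 one_pos (fun _ => a)
    (paretoImprove_self (a := a) (by rwa [emp_const]))
  rw [hZM 1 one_pos] at h
  simpa [srLoss] using h

/-- a scoring rule satisfying SPA must violate Zero-Minimum. -/
theorem scoring_rule_SPA_violates_ZM (d : ℕ) (hd2 : 2 ≤ d)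
    (S : (Fin d → ℝ) → Fin d → ℝ)
    (hSPA : ∀ (f g : Fin d → ℝ), IsSimplex f → IsSimplex g →
      ∀ (n : ℕ), 0 < n → ∀ (y : Fin n → Fin d),
        ParetoImprove (emp y) f g → srLoss S f y < srLoss S g y) :
    ∃ (n : ℕ) (_ : 0 < n) (y : Fin n → Fin d), srLoss S (emp y) y ≠ 0 := by
  by_contra hcon
  push Not at hcon
  let a : Fin d := ⟨0, by omega⟩
  let b : Fin d := ⟨1, by omega⟩
  have hab : a ≠ b := by simp [a, b]
  obtain ⟨hga, hgb⟩ := emp_pair hab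
  have hg := isSimplex_emp two_pos ![a, b]
  have h0 := score_pos hSPA hcon hg (a := a) (by rw [hga]; norm_num)
  have h1 := score_pos hSPA hcon hg (a := b) (by rw [hgb]; norm_num)
  have h := hcon 2 two_pos ![a, b]
  simp only [srLoss, Fin.sum_univ_two, Matrix.cons_val_zero, Matrix.cons_val_one] at h
  push_cast at h
  linarith
end

section
/- Bregman-form scoring rules are distributionally proper (one direction of the Gneiting–Raftery characterization): let B : Δ(A) → ℝ be strictly convex with subgradient dB : Δ(A) → ℝ^d, and define the scoring rule S(f, a) = −B(f) − dB(f)ᵀ(e_a − f). Then the induced loss L_S satisfies Distributional Propriety — for every p ∈ Δ(A), n ≥ 1, and f ∈ Δ(A) with f ≠ p, E_{y∼p^n} L_S(p, y) < E_{y∼p^n} L_S(f, y) — and Sample Propriety: for every dataset y and f ≠ p̄(y), L_S(p̄(y), y) < L_S(f, y). -/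
/-!
For a fixed forecast `f`, the average of a Bregman-form score `S f` against a distribution `p` is
`-(B f + ⟨dB f, p - f⟩)`, minus the value at `p` of the supporting hyperplane of `B` at `f`
(`sum_mul_score`). At `f = p` this is `-B p`, and for `f ≠ p` it is strictly larger, since the
supporting hyperplane of a strictly convex function touches its graph only at the base point
(`subgradient_strict`, by comparison at the midpoint). Hence `p` is the unique minimiser of the
`p`-averaged score (`score_proper`).

Both kinds of propriety are instances of this: the expected loss under `p^n` is the `p`-average of
`S f` (`expLoss_srLoss`), because every single draw has marginal `p`; and the loss on a dataset `y`
is the `emp y`-average of `S f` (`srLoss_eq_sum_emp`).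
-/

open Finset

/-- The subgradient inequality is strict away from the base point: otherwise it would contradict
strict convexity at the midpoint of `f` and `p`. -/
lemma subgradient_strict {d : ℕ} {B : (Fin d → ℝ) → ℝ}
    (hstrict : StrictConvexOn ℝ {f : Fin d → ℝ | IsSimplex f} B)
    {dB : (Fin d → ℝ) → (Fin d → ℝ)}
    (hsub : ∀ x₀ : Fin d → ℝ, IsSimplex x₀ → ∀ x : Fin d → ℝ, IsSimplex x →
      ∑ a, dB x₀ a * (x a - x₀ a) ≤ B x - B x₀)
    {f p : Fin d → ℝ} (hf : IsSimplex f) (hp : IsSimplex p) (hne : f ≠ p) :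
    ∑ a, dB f a * (p a - f a) < B p - B f := by
  have hhalf : (0 : ℝ) < 1 / 2 := by norm_num
  have hsum : (1 / 2 : ℝ) + 1 / 2 = 1 := by norm_num
  have hlt := hstrict.2 hf hp hne hhalf hhalf hsum
  have hmid : IsSimplex ((1 / 2 : ℝ) • f + (1 / 2 : ℝ) • p) :=
    hstrict.1 hf hp hhalf.le hhalf.le hsum
  have hle := hsub f hf _ hmid
  have heq : ∑ a, dB f a * (((1 / 2 : ℝ) • f + (1 / 2 : ℝ) • p) a - f a)
      = 1 / 2 * ∑ a, dB f a * (p a - f a) := by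
    rw [Finset.mul_sum]
    refine Finset.sum_congr rfl fun a _ => ?_
    simp only [Pi.add_apply, Pi.smul_apply, smul_eq_mul]
    ring
  rw [heq] at hle
  simp only [smul_eq_mul] at hlt
  linarith

lemma sum_mul_pointMass {d : ℕ} (p : Fin d → ℝ) (b : Fin d) :
    ∑ a, p a * pointMass a b = p b := by
  simp [pointMass]

/-- The `p`-average of a Bregman-form score, using that `∑ a, p a • e_a = p`. -/
lemma sum_mul_score {d : ℕ} {B : (Fin d → ℝ) → ℝ} {dB : (Fin d → ℝ) → (Fin d → ℝ)}
    {S : (Fin d → ℝ) → Fin d → ℝ}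
    (hS : ∀ (f : Fin d → ℝ) (a : Fin d),
      S f a = -B f - ∑ a', dB f a' * (pointMass a a' - f a'))
    {p : Fin d → ℝ} (hp : IsSimplex p) (f : Fin d → ℝ) :
    ∑ a, p a * S f a = -B f - ∑ a, dB f a * (p a - f a) := by
  have hswap : ∑ a, p a * ∑ b, dB f b * (pointMass a b - f b)
      = ∑ b, dB f b * (p b - f b) := by
    simp_rw [Finset.mul_sum]
    rw [Finset.sum_comm]
    refine Finset.sum_congr rfl fun b _ => ?_
    calc ∑ a, p a * (dB f b * (pointMass a b - f b))
        = ∑ a, (dB f b * (p a * pointMass a b) - dB f b * f b * p a) :=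
          Finset.sum_congr rfl fun a _ => by ring
      _ = dB f b * (p b - f b) := by
          rw [Finset.sum_sub_distrib, ← Finset.mul_sum, ← Finset.mul_sum,
            sum_mul_pointMass, hp.2]
          ring
  simp_rw [hS, mul_sub (p _) (-B f)]
  rw [Finset.sum_sub_distrib, hswap, ← Finset.sum_mul, hp.2, one_mul]

lemma score_proper {d : ℕ} {B : (Fin d → ℝ) → ℝ}
    (hstrict : StrictConvexOn ℝ {f : Fin d → ℝ | IsSimplex f} B)
    {dB : (Fin d → ℝ) → (Fin d → ℝ)}
    (hsub : ∀ x₀ : Fin d → ℝ, IsSimplex x₀ → ∀ x : Fin d → ℝ, IsSimplex x →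
      ∑ a, dB x₀ a * (x a - x₀ a) ≤ B x - B x₀)
    {S : (Fin d → ℝ) → Fin d → ℝ}
    (hS : ∀ (f : Fin d → ℝ) (a : Fin d),
      S f a = -B f - ∑ a', dB f a' * (pointMass a a' - f a'))
    {f p : Fin d → ℝ} (hf : IsSimplex f) (hp : IsSimplex p) (hne : f ≠ p) :
    ∑ a, p a * S p a < ∑ a, p a * S f a := by
  have h := subgradient_strict hstrict hsub hf hp hne
  rw [sum_mul_score hS hp, sum_mul_score hS hp]
  simp only [sub_self, mul_zero, Finset.sum_const_zero]
  linarith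

/-- Each coordinate of `n` i.i.d. draws from `p` has marginal distribution `p`. -/
lemma sum_prod_mul_apply {d n : ℕ} {p : Fin d → ℝ} (hp : IsSimplex p) (h : Fin d → ℝ)
    (i : Fin n) :
    ∑ y : Fin n → Fin d, (∏ j, p (y j)) * h (y i) = ∑ a, p a * h a := by
  -- Absorbing `h` into the `i`-th factor lets the sum factor over coordinates.
  have hfac : ∀ y : Fin n → Fin d, (∏ j, p (y j)) * h (y i)
      = ∏ j, p (y j) * (if j = i then h (y j) else 1) := by
    intro y
    rw [Finset.prod_mul_distrib, Finset.prod_ite_eq' Finset.univ i (fun j => h (y j))]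
    simp
  simp_rw [hfac]
  rw [← Fintype.prod_sum (fun (j : Fin n) (a : Fin d) => p a * (if j = i then h a else 1)),
    Finset.prod_eq_single i]
  · simp
  · intro j _ hj
    simp [hj, hp.2]
  · simp

lemma expLoss_srLoss {d n : ℕ} (hn : 0 < n) {p : Fin d → ℝ} (hp : IsSimplex p)
    (S : (Fin d → ℝ) → Fin d → ℝ) (f : Fin d → ℝ) :
    expLoss p n (fun y => srLoss S f y) = ∑ a, p a * S f a := by
  have hn' : (n : ℝ) ≠ 0 := by positivity
  calc expLoss p n (fun y => srLoss S f y)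
      = ∑ y : Fin n → Fin d, ∑ i, (n : ℝ)⁻¹ * ((∏ j, p (y j)) * S f (y i)) := by
        simp only [expLoss, srLoss]
        refine Finset.sum_congr rfl fun y _ => ?_
        rw [← Finset.mul_sum, ← Finset.mul_sum]
        ring
    _ = ∑ _i : Fin n, (n : ℝ)⁻¹ * ∑ a, p a * S f a := by
        rw [Finset.sum_comm]
        refine Finset.sum_congr rfl fun i _ => ?_
        rw [← Finset.mul_sum, sum_prod_mul_apply hp]
    _ = ∑ a, p a * S f a := by
        simp [hn']

lemma srLoss_eq_sum_emp {d n : ℕ} (S : (Fin d → ℝ) → Fin d → ℝ) (f : Fin d → ℝ)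
    (y : Fin n → Fin d) : srLoss S f y = ∑ a, emp y a * S f a := by
  unfold srLoss emp
  rw [← Finset.sum_fiberwise Finset.univ y (fun i => S f (y i)), Finset.mul_sum]
  refine Finset.sum_congr rfl fun a _ => ?_
  have h : ∑ i ∈ Finset.univ.filter (fun i => y i = a), S f (y i)
      = ∑ _i ∈ Finset.univ.filter (fun i => y i = a), S f a :=
    Finset.sum_congr rfl fun i hi => by rw [(Finset.mem_filter.mp hi).2]
  rw [h, Finset.sum_const, nsmul_eq_mul]
  ring

/-- Bregman-form scoring rules satisfy Distributional Propriety and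
Sample Propriety (one direction of the Gneiting–Raftery characterization). -/
theorem bregman_scoring_rule_proper (d : ℕ) (hd2 : 2 ≤ d)
    (B : (Fin d → ℝ) → ℝ)
    (hstrict : StrictConvexOn ℝ {f : Fin d → ℝ | IsSimplex f} B)
    (dB : (Fin d → ℝ) → (Fin d → ℝ))
    (hsub : ∀ x₀ : Fin d → ℝ, IsSimplex x₀ → ∀ x : Fin d → ℝ, IsSimplex x →
      ∑ a, dB x₀ a * (x a - x₀ a) ≤ B x - B x₀)
    (S : (Fin d → ℝ) → Fin d → ℝ)
    (hS : ∀ (f : Fin d → ℝ) (a : Fin d),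
      S f a = -B f - ∑ a', dB f a' * (pointMass a a' - f a')) :
    (∀ (p : Fin d → ℝ), IsSimplex p → ∀ (n : ℕ), 0 < n →
      ∀ (f : Fin d → ℝ), IsSimplex f → f ≠ p →
        expLoss p n (fun y => srLoss S p y) < expLoss p n (fun y => srLoss S f y)) ∧
    (∀ (n : ℕ), 0 < n → ∀ (y : Fin n → Fin d) (f : Fin d → ℝ), IsSimplex f →
      f ≠ emp y → srLoss S (emp y) y < srLoss S f y) := by
  refine ⟨fun p hp n hn f hf hne => ?_, fun n hn y f hf hne => ?_⟩
  · rw [expLoss_srLoss hn hp, expLoss_srLoss hn hp]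
    exact score_proper hstrict hsub hS hf hp hne
  · rw [srLoss_eq_sum_emp, srLoss_eq_sum_emp]
    exact score_proper hstrict hsub hS hf (isSimplex_emp hn y) hne
end
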